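/- Let N ≥ 1, let D be an N × N real matrix with D_{ii} = 0 and D_{ij} > 0 for i ≠ j, let γ ⊆ {1, …, N} be a nonempty medoid set with |γ| = K such that for every j the minimizer of D_{lj} over l ∈ γ is unique, and let δ₁, δ₂, μ, β, θ be positive reals. Write n_i^⋆ = |C_i(D, γ)| − 1 for i ∈ γ. Then the iterated integral over (λ_i)_{i ∈ γ} ∈ (0, ∞)^K of [∏_{i ∈ γ} ∏_{j ∈ C_i(D,γ) \ {i}} (λ_i^{δ₁}/Γ(δ₁)) D_{ij}^{δ₁−1} e^{−λ_i D_{ij}}] · [∏_{i ∈ γ} (β^μ/Γ(μ)) λ_i^{μ−1} e^{−β λ_i}] · [∏_{i, j ∈ γ, i < j} (θ^{δ₂}/Γ(δ₂)) D_{ij}^{δ₂−1} e^{−θ D_{ij}}] equals ∏_{i ∈ γ} L_i^{(1)} · ∏_{i < j ∈ γ} (θ^{δ₂}/Γ(δ₂)) D_{ij}^{δ₂−1} e^{−θ D_{ij}}, where L_i^{(1)} = Γ(δ₁)^{−n_i^⋆} (Γ(μ + n_i^⋆ δ₁)/Γ(μ)) β^μ (∏_{j ∈ C_i(D,γ)\{i}}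 D_{ij})^{δ₁−1} (β + ∑_{j ∈ C_i(D,γ)\{i}} D_{ij})^{−μ − δ₁ n_i^⋆}. -/

import Mathlib

open MeasureTheory Real Finset

/-- The Voronoi cluster (as a `Finset`) of medoid `i` in the medoid set `γ` for distance
matrix `D`: all objects `j` whose minimizer of `D l j` over `l ∈ γ` is `i`. -/
noncomputable def voronoiClusterF {N : ℕ} (D : Fin N → Fin N → ℝ) (γ : Finset (Fin N))
    (i : Fin N) : Finset (Fin N) :=
  Finset.univ.filter (fun j => i ∈ γ ∧ ∀ l ∈ γ, D i j ≤ D l j)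

/-!
Once the repulsion term is pulled out, the integrand is a product of functions of the individual
rates, so Fubini leaves one integral per medoid. That integral is the Gamma conjugacy computation:
as a function of its rate, a product of Gamma densities with shapes `δ j` at the points `d j` times
a `Gamma(μ, β)` prior is proportional to a `Gamma(μ + ∑ δ j, β + ∑ d j)` density.
-/

theorem prod_gammaDensity_mul_gammaPrior_eq {ι : Type*} (s : Finset ι) (δ d : ι → ℝ) (μ β : ℝ)
    {x : ℝ} (hx : 0 < x) :
    (∏ j ∈ s, x ^ δ j / Gamma (δ j) * d j ^ (δ j - 1) * exp (-(x * d j))) *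
        (β ^ μ / Gamma μ * x ^ (μ - 1) * exp (-(β * x))) =
      (∏ j ∈ s, d j ^ (δ j - 1) / Gamma (δ j)) * (β ^ μ / Gamma μ) *
        (x ^ (μ + ∑ j ∈ s, δ j - 1) * exp (-((β + ∑ j ∈ s, d j) * x))) := by
  have rpow_split : x ^ (μ + ∑ j ∈ s, δ j - 1) = (∏ j ∈ s, x ^ δ j) * x ^ (μ - 1) := by
    rw [← rpow_sum_of_pos hx, ← rpow_add hx]
    ring_nf
  have exp_split : exp (-((β + ∑ j ∈ s, d j) * x)) =
      (∏ j ∈ s, exp (-(x * d j))) * exp (-(β * x)) := by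
    rw [← exp_sum, ← exp_add, sum_neg_distrib, ← mul_sum]
    ring_nf
  rw [rpow_split, exp_split]
  simp only [prod_mul_distrib, prod_div_distrib]
  ring

theorem integral_prod_gammaDensity_mul_gammaPrior {ι : Type*} (s : Finset ι) (δ d : ι → ℝ)
    {μ β : ℝ} (hshape : 0 < μ + ∑ j ∈ s, δ j) (hrate : 0 < β + ∑ j ∈ s, d j) :
    ∫ x in Set.Ioi (0 : ℝ),
        (∏ j ∈ s, x ^ δ j / Gamma (δ j) * d j ^ (δ j - 1) * exp (-(x * d j))) *
          (β ^ μ / Gamma μ * x ^ (μ - 1) * exp (-(β * x))) =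
      (∏ j ∈ s, d j ^ (δ j - 1) / Gamma (δ j)) * (β ^ μ / Gamma μ) *
        ((β + ∑ j ∈ s, d j) ^ (-(μ + ∑ j ∈ s, δ j)) * Gamma (μ + ∑ j ∈ s, δ j)) := by
  rw [setIntegral_congr_fun measurableSet_Ioi fun x hx =>
      prod_gammaDensity_mul_gammaPrior_eq s δ d μ β hx,
    integral_const_mul, integral_rpow_mul_exp_neg_mul_Ioi hshape hrate, one_div,
    inv_rpow hrate.le, ← rpow_neg hrate.le]

theorem integral_prod_gammaDensity_mul_gammaPrior_of_const_shape {ι : Type*} (s : Finset ι)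
    {d : ι → ℝ} (hd : ∀ j ∈ s, 0 < d j) {δ μ β : ℝ} (hδ : 0 < δ) (hμ : 0 < μ) (hβ : 0 < β) :
    ∫ x in Set.Ioi (0 : ℝ),
        (∏ j ∈ s, x ^ δ / Gamma δ * d j ^ (δ - 1) * exp (-(x * d j))) *
          (β ^ μ / Gamma μ * x ^ (μ - 1) * exp (-(β * x))) =
      Gamma δ ^ (-(#s : ℝ)) * (Gamma (μ + #s * δ) / Gamma μ) * β ^ μ *
        (∏ j ∈ s, d j) ^ (δ - 1) * (β + ∑ j ∈ s, d j) ^ (-μ - δ * #s) := by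
  have sum_shape : ∑ _j ∈ s, δ = #s * δ := by rw [sum_const, nsmul_eq_mul]
  have hshape : 0 < μ + ∑ _j ∈ s, δ := by rw [sum_shape]; positivity
  have hrate : 0 < β + ∑ j ∈ s, d j :=
    add_pos_of_pos_of_nonneg hβ (sum_nonneg fun j hj => (hd j hj).le)
  have prod_factor : ∏ j ∈ s, d j ^ (δ - 1) / Gamma δ =
      (∏ j ∈ s, d j) ^ (δ - 1) * Gamma δ ^ (-(#s : ℝ)) := by
    rw [prod_div_distrib, prod_const, finsetProd_rpow s d fun j hj => (hd j hj).le,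
      rpow_neg (Gamma_pos_of_pos hδ).le, rpow_natCast, div_eq_mul_inv]
  rw [integral_prod_gammaDensity_mul_gammaPrior s (fun _ => δ) d hshape hrate, prod_factor,
    sum_shape, show -(μ + #s * δ) = -μ - δ * #s by ring]
  ring

theorem setIntegral_univ_pi_prod_eq_prod {ι 𝕜 : Type*} [Fintype ι] [RCLike 𝕜] {E : ι → Type*}
    [∀ i, MeasureSpace (E i)] [∀ i, SigmaFinite (volume : Measure (E i))]
    (s : ∀ i, Set (E i)) (f : ∀ i, E i → 𝕜) :
    ∫ x in Set.univ.pi s, ∏ i, f i (x i) = ∏ i, ∫ x in s i, f i x := by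
  rw [volume_pi, Measure.restrict_pi_pi, integral_fintype_prod_eq_prod]

theorem self_mem_voronoiClusterF {N : ℕ} {D : Fin N → Fin N → ℝ} {γ : Finset (Fin N)} {i : Fin N}
    (hi : i ∈ γ) (hdiag : D i i = 0) (hpos : ∀ l ∈ γ, l ≠ i → 0 < D l i) :
    i ∈ voronoiClusterF D γ i := by
  refine mem_filter.mpr ⟨mem_univ i, hi, fun l hl => ?_⟩
  rcases eq_or_ne l i with rfl | hne
  · exact le_rfl
  · exact hdiag.trans_le (hpos l hl hne).le

theorem bdc_linear_marginal_likelihood_general {α : Type*} [DecidableEq α] (D : α → α → ℝ)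
    (γ : Finset α) (C : α → Finset α) (hmedoid : ∀ i ∈ γ, i ∈ C i)
    (hpos : ∀ i ∈ γ, ∀ j ∈ (C i).erase i, 0 < D i j)
    {δ₁ μ β : ℝ} (hδ₁ : 0 < δ₁) (hμ : 0 < μ) (hβ : 0 < β) (repulsion : ℝ) :
    ∫ lam in Set.univ.pi (fun _ : {i // i ∈ γ} => Set.Ioi (0 : ℝ)),
        (∏ i ∈ γ.attach, ∏ j ∈ (C i.1).erase i.1,
            lam i ^ δ₁ / Gamma δ₁ * D i.1 j ^ (δ₁ - 1) * exp (-(lam i * D i.1 j))) *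
          (∏ i ∈ γ.attach, β ^ μ / Gamma μ * lam i ^ (μ - 1) * exp (-(β * lam i))) *
          repulsion =
      (∏ i ∈ γ,
        Gamma δ₁ ^ (-((#(C i) - 1 : ℕ) : ℝ)) *
          (Gamma (μ + ((#(C i) - 1 : ℕ) : ℝ) * δ₁) / Gamma μ) * β ^ μ *
          (∏ j ∈ (C i).erase i, D i j) ^ (δ₁ - 1) *
          (β + ∑ j ∈ (C i).erase i, D i j) ^ (-μ - δ₁ * ((#(C i) - 1 : ℕ) : ℝ))) *
        repulsion := by
  simp only [integral_mul_const, ← prod_mul_distrib, ← univ_eq_attach]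
  rw [setIntegral_univ_pi_prod_eq_prod (fun _ : {i // i ∈ γ} => Set.Ioi (0 : ℝ))
    fun i x => (∏ j ∈ (C i.1).erase i.1,
      x ^ δ₁ / Gamma δ₁ * D i.1 j ^ (δ₁ - 1) * exp (-(x * D i.1 j))) *
        (β ^ μ / Gamma μ * x ^ (μ - 1) * exp (-(β * x))), ← prod_attach γ, ← univ_eq_attach]
  congr 1
  refine prod_congr rfl fun i _ => ?_
  rw [integral_prod_gammaDensity_mul_gammaPrior_of_const_shape _ (hpos i i.2) hδ₁ hμ hβ,
    card_erase_of_mem (hmedoid i i.2)]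

/-- Closed form of the medoid-based "linear" Bayesian distance clustering likelihood after
integrating out the cluster-specific rates `λ_i` (with Gamma(μ, β) priors): the cohesion
term marginalizes to `L_i⁽¹⁾` while the medoid–medoid repulsion term is unchanged. -/
theorem bdc_linear_marginal_likelihood (N K : ℕ) (hN : 1 ≤ N)
    (D : Fin N → Fin N → ℝ)
    (hdiag : ∀ i, D i i = 0) (hpos : ∀ i j, i ≠ j → 0 < D i j)
    (γ : Finset (Fin N)) (hγ : γ.Nonempty) (hcard : γ.card = K)
    (huniq : ∀ j, ∃! i, i ∈ γ ∧ ∀ l ∈ γ, D i j ≤ D l j)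
    (δ₁ δ₂ μ β θ : ℝ)
    (hδ₁ : 0 < δ₁) (hδ₂ : 0 < δ₂) (hμ : 0 < μ) (hβ : 0 < β) (hθ : 0 < θ) :
    (∫ lam in Set.univ.pi (fun _ : {i // i ∈ γ} => Set.Ioi (0 : ℝ)),
      (∏ i ∈ γ.attach, ∏ j ∈ (voronoiClusterF D γ i.1).erase i.1,
          (lam i ^ δ₁ / Real.Gamma δ₁) * D i.1 j ^ (δ₁ - 1) *
            Real.exp (-(lam i * D i.1 j))) *
      (∏ i ∈ γ.attach, (β ^ μ / Real.Gamma μ) * lam i ^ (μ - 1) *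
          Real.exp (-(β * lam i))) *
      (∏ i ∈ γ, ∏ j ∈ γ.filter (fun j => i < j),
          (θ ^ δ₂ / Real.Gamma δ₂) * D i j ^ (δ₂ - 1) * Real.exp (-(θ * D i j))))
    =
    (∏ i ∈ γ,
        Real.Gamma δ₁ ^ (-((((voronoiClusterF D γ i).card - 1 : ℕ) : ℝ))) *
          (Real.Gamma (μ + (((voronoiClusterF D γ i).card - 1 : ℕ) : ℝ) * δ₁) /
            Real.Gamma μ) *
          β ^ μ *
          (∏ j ∈ (voronoiClusterF D γ i).erase i, D i j) ^ (δ₁ - 1) *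
          (β + ∑ j ∈ (voronoiClusterF D γ i).erase i, D i j) ^
            (-μ - δ₁ * (((voronoiClusterF D γ i).card - 1 : ℕ) : ℝ))) *
    (∏ i ∈ γ, ∏ j ∈ γ.filter (fun j => i < j),
        (θ ^ δ₂ / Real.Gamma δ₂) * D i j ^ (δ₂ - 1) * Real.exp (-(θ * D i j))) := by
  exact bdc_linear_marginal_likelihood_general D γ (voronoiClusterF D γ)
    (fun i hi => self_mem_voronoiClusterF hi (hdiag i) fun l _ => hpos l i)
    (fun i _ j hj => hpos i j (ne_of_mem_erase hj).symm) hδ₁ hμ hβ _
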